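/- arXiv:2102.04041 — 2 statements merged into one kernel-verified Lean document; each statement's English description precedes it below -/
import Mathlib

section
/- Let r ≥ 1 be an odd integer and let n ≥ 10r. If G is a θ_{r+1}-free graph on n vertices, then ρ(G) ≤ ρ(T_{n,2}), with equality if and only if G is isomorphic to the Turán graph T_{n,2}. -/
open SimpleGraph Finset

attribute [local instance] Classical.propDecidable

/-- The spectral radius (largest adjacency eigenvalue) of a graph on `Fin n`. -/
noncomputable def adjSpectralRadius {n : ℕ} (G : SimpleGraph (Fin n)) : ℝ :=
  sSup (spectrum ℝ (G.adjMatrix ℝ))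

/-- `G` contains a copy of `H` (a subgraph isomorphic to `H`). -/
def Contains {α β : Type*} (G : SimpleGraph α) (H : SimpleGraph β) : Prop :=
  ∃ f : β ↪ α, ∀ a b, H.Adj a b → G.Adj (f a) (f b)

/-- The book `B_s`: `s` triangles sharing a common edge, i.e. `K_{2,s}` plus the
edge inside the part of size two. -/
def book (s : ℕ) : SimpleGraph (Fin 2 ⊕ Fin s) :=
  SimpleGraph.fromRel (fun x _ => x.isLeft = true)

/-- The theta graph `θ_{r+1} = θ(1,2,r+1)`: vertices `0,…,r+1` form a path of length
`r+1`, the edge `0 ~ (r+1)`, and vertex `r+2` is adjacent to `0` and `r+1`. -/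
def theta (r : ℕ) : SimpleGraph (Fin (r + 3)) :=
  SimpleGraph.fromRel (fun x y =>
    (x.val + 1 = y.val ∧ y.val ≤ r + 1) ∨
    (x.val = 0 ∧ y.val = r + 1) ∨
    (x.val = r + 2 ∧ (y.val = 0 ∨ y.val = r + 1)))

/-- The number of edges of a graph. -/
noncomputable def edgeCount {V : Type*} (G : SimpleGraph V) : ℕ := G.edgeSet.ncard

/-- The number of ordered pairs `(a,b) ∈ s × t` with `a ~ b`.  For disjoint `s` and `t`
this is the number `e(s,t)` of edges between `s` and `t`; for `s = t` it is `2·e(s)`. -/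
noncomputable def ordPairs {V : Type*} (G : SimpleGraph V) (s t : Finset V) : ℕ :=
  ((s ×ˢ t).filter fun p => G.Adj p.1 p.2).card

/-- The number of edges inside a vertex subset `s`. -/
noncomputable def edgesIn {V : Type*} (G : SimpleGraph V) (s : Finset V) : ℕ :=
  (G.induce (s : Set V)).edgeSet.ncard

/-! ### Combinatorial part -/

section Comb

variable {V : Type*}

/-- Number of neighbours of `v` inside `S`. -/
noncomputable def dg (G : SimpleGraph V) (v : V) (S : Finset V) : ℕ := (S.filter (G.Adj v)).card

lemma dg_le (G : SimpleGraph V) (v : V) (S : Finset V) : dg G v S ≤ S.card :=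
  Finset.card_filter_le _ _

lemma dg_eq_sum (G : SimpleGraph V) (v : V) (S : Finset V) :
    dg G v S = ∑ w ∈ S, if G.Adj v w then 1 else 0 := by
  unfold dg; rw [Finset.card_filter]

lemma dg_comm (G : SimpleGraph V) (S T : Finset V) :
    ∑ v ∈ S, dg G v T = ∑ w ∈ T, dg G w S := by
  simp only [dg_eq_sum]
  rw [Finset.sum_comm]
  simp only [G.adj_comm]

lemma dg_union (G : SimpleGraph V) (v : V) {S T : Finset V} (h : Disjoint S T) :
    dg G v (S ∪ T) = dg G v S + dg G v T := by
  simp only [dg_eq_sum]; rw [Finset.sum_union h]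

lemma dg_insert (G : SimpleGraph V) (v a : V) {S : Finset V} (h : a ∉ S) :
    dg G v (insert a S) = (if G.Adj v a then 1 else 0) + dg G v S := by
  simp only [dg_eq_sum]; rw [Finset.sum_insert h]

lemma dg_erase (G : SimpleGraph V) (v a : V) {S : Finset V} (h : a ∈ S) :
    dg G v S = (if G.Adj v a then 1 else 0) + dg G v (S.erase a) := by
  rw [← dg_insert G v a (Finset.notMem_erase a S), Finset.insert_erase h]

lemma dg_pos (G : SimpleGraph V) (v : V) (S : Finset V) :
    0 < dg G v S ↔ ∃ w ∈ S, G.Adj v w := by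
  unfold dg; rw [Finset.card_pos]
  constructor
  · rintro ⟨w, hw⟩; exact ⟨w, (Finset.mem_filter.1 hw).1, (Finset.mem_filter.1 hw).2⟩
  · rintro ⟨w, h1, h2⟩; exact ⟨w, Finset.mem_filter.2 ⟨h1, h2⟩⟩

lemma dg_exists (G : SimpleGraph V) (v : V) (S X : Finset V) (h : (X ∩ S).card < dg G v S) :
    ∃ w ∈ S, G.Adj v w ∧ w ∉ X := by
  by_contra hc
  push Not at hc
  refine absurd h (not_lt.2 (Finset.card_le_card ?_))
  intro w hw
  obtain ⟨h1, h2⟩ := Finset.mem_filter.1 hw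
  exact Finset.mem_inter.2 ⟨hc w h1 h2, h1⟩

lemma theta_of_list (G : SimpleGraph V) (r : ℕ) (m : List V) (c : V) (hm : m.length = r + 2)
    (hch : m.IsChain G.Adj) (hnd : m.Nodup) (h0 : G.Adj (m[0]'(by omega)) (m[r+1]'(by omega)))
    (hc : c ∉ m) (hc0 : G.Adj c (m[0]'(by omega))) (hc1 : G.Adj c (m[r+1]'(by omega))) :
    Contains G (theta r) := by
  have hl : (m ++ [c]).length = r + 3 := by simp [hm]
  have hnd' : (m ++ [c]).Nodup := by
    rw [List.nodup_append]
    refine ⟨hnd, by simp, ?_⟩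
    intro a ha b hb
    simp at hb; subst hb; rintro rfl; exact hc ha
  have hlt : ∀ i : Fin (r+3), i.val < (m ++ [c]).length := fun i => by rw [hl]; exact i.2
  let f : Fin (r+3) → V := fun i => (m ++ [c])[i.val]'(hlt i)
  have hf1 : ∀ i : Fin (r+3), ∀ h : i.val < m.length, f i = m[i.val]'h := by
    intro i h
    simp only [f]
    rw [List.getElem_append_left h]
  have hf2 : ∀ i : Fin (r+3), i.val = r + 2 → f i = c := by
    intro i h
    simp only [f]
    rw [List.getElem_append_right (by omega)]
    simp
  have key : ∀ x y : Fin (r+3), ((x.val + 1 = y.val ∧ y.val ≤ r + 1) ∨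
    (x.val = 0 ∧ y.val = r + 1) ∨
    (x.val = r + 2 ∧ (y.val = 0 ∨ y.val = r + 1))) → G.Adj (f x) (f y) := by
    intro x y h
    rcases h with ⟨h1, h2⟩ | ⟨h1, h2⟩ | ⟨h1, h2⟩
    · rw [hf1 x (by omega), hf1 y (by omega)]
      have := List.isChain_iff_getElem.1 hch x.val (by omega)
      simpa [h1] using this
    · rw [hf1 x (by omega), hf1 y (by omega)]
      simpa [h1, h2] using h0
    · rw [hf2 x h1, hf1 y (by omega)]
      rcases h2 with h2 | h2
      · simpa [h2] using hc0
      · simpa [h2] using hc1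
  refine ⟨⟨f, ?_⟩, ?_⟩
  · intro i j hij
    have := (List.Nodup.getElem_inj_iff hnd').1 hij
    exact Fin.ext this
  · intro a b hab
    simp only [theta, SimpleGraph.fromRel_adj] at hab
    rcases hab.2 with h | h
    · exact key a b h
    · exact (key b a h).symm

/-- Greedy path inside a set of large minimum degree. -/
lemma greedy (G : SimpleGraph V) (s : Finset V) (r : ℕ) (hs : s.Nonempty)
    (h : ∀ v ∈ s, r < dg G v s) : ∀ j, j ≤ r + 1 →
    ∃ l : List V, l.length = j + 1 ∧ l.IsChain G.Adj ∧ l.Nodup ∧ ∀ x ∈ l, x ∈ s := by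
  intro j
  induction j with
  | zero =>
    intro _
    obtain ⟨v, hv⟩ := hs
    exact ⟨[v], by simp, by simp, by simp, by simpa using hv⟩
  | succ j ih =>
    intro hj
    obtain ⟨l, hl, hch, hnd, hmem⟩ := ih (by omega)
    match l, hl, hch, hnd, hmem with
    | v :: t, hl, hch, hnd, hmem =>
      have hv : v ∈ s := hmem v (by simp)
      have hcard : (t.toFinset ∩ s).card < dg G v s := by
        have h1 : (t.toFinset ∩ s).card ≤ t.toFinset.card :=
          Finset.card_le_card Finset.inter_subset_left
        have h2 := List.toFinset_card_le t
        have h3 := h v hv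
        simp at hl
        omega
      obtain ⟨w, hw, hvw, hwt⟩ := dg_exists G v s _ hcard
      refine ⟨w :: v :: t, by simp at hl ⊢; omega, ?_, ?_, ?_⟩
      · exact List.IsChain.cons_cons hvw.symm hch
      · rw [List.nodup_cons]
        refine ⟨?_, hnd⟩
        rw [List.mem_cons]
        rintro (h1 | h1)
        · subst h1; exact hvw.ne rfl
        · exact hwt (by simpa using h1)
      · intro x hx
        rcases List.mem_cons.1 hx with rfl | hx
        · exact hw
        · exact hmem x hx

lemma degen (G : SimpleGraph V) (r : ℕ) (u : V) (hfree : ¬ Contains G (theta r))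
    (s : Finset V) (hs : ∀ v ∈ s, G.Adj u v) : ∑ v ∈ s, dg G v s ≤ 2 * r * s.card := by
  induction s using Finset.strongInduction with
  | H s ih =>
    rcases s.eq_empty_or_nonempty with rfl | hne
    · simp
    have hex : ∃ v ∈ s, dg G v s ≤ r := by
      by_contra hcon
      push Not at hcon
      obtain ⟨l, hl, hch, hnd, hmem⟩ := greedy G s r hne hcon (r+1) le_rfl
      match l, hl, hch, hnd, hmem with
      | c :: a :: t, hl, hch, hnd, hmem =>
        simp at hl
        have hu : u ∉ c :: a :: t := fun hu => (hs u (hmem u hu)).ne rfl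
        apply hfree
        have hca : G.Adj c a := by
          have := hch; rw [List.isChain_cons_cons] at this; exact this.1
        have hcht : (a :: t).IsChain G.Adj := by
          have := hch; rw [List.isChain_cons_cons] at this; exact this.2
        have hua := hs a (hmem a (by simp))
        have huc := hs c (hmem c (by simp))
        have hlast : (a :: t ++ [u])[r+1]'(by simp; omega) = u := by
          rw [List.getElem_append_right (by simp; omega)]; simp
        refine theta_of_list G r (a :: t ++ [u]) c (by simp; omega) ?_ ?_ ?_ ?_ ?_ ?_
        · rw [List.isChain_append]
          refine ⟨hcht, by simp, ?_⟩
          intro x hx y hy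
          simp at hy; subst hy
          exact (hs x (hmem x (List.mem_cons_of_mem _ (List.mem_of_mem_getLast? hx)))).symm
        · rw [List.nodup_append]
          refine ⟨(List.nodup_cons.1 hnd).2, by simp, ?_⟩
          intro x hx y hy
          simp at hy; subst hy
          rintro rfl
          exact hu (List.mem_cons_of_mem _ hx)
        · rw [hlast]; simpa using hua.symm
        · intro hc
          rcases List.mem_append.1 hc with h | h
          · exact (List.nodup_cons.1 hnd).1 h
          · simp at h; exact huc.ne h.symm
        · simpa using hca
        · rw [hlast]; exact huc.symm
    obtain ⟨v, hv, hvr⟩ := hex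
    have h1 := ih (s.erase v) (Finset.erase_ssubset hv) (fun w hw => hs w (Finset.mem_of_mem_erase hw))
    have h2 : ∑ w ∈ s.erase v, dg G w s
        = dg G v (s.erase v) + ∑ w ∈ s.erase v, dg G w (s.erase v) := by
      rw [dg_eq_sum, ← Finset.sum_add_distrib]
      refine Finset.sum_congr rfl fun w _ => ?_
      rw [dg_erase G w v hv]; simp only [G.adj_comm]
    have h3 : dg G v s = dg G v (s.erase v) := by
      rw [dg_erase G v v hv]; simp
    rw [← Finset.add_sum_erase s _ hv, h2]
    have h4 := Finset.card_erase_add_one hv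
    rw [← h4]
    nlinarith

/-- Core of the bipartite graph between `N` and `W`. -/
lemma core (G : SimpleGraph V) (t q : ℕ) : ∀ (m : ℕ) (N W : Finset V), N.card + W.card = m →
    ∃ QN ⊆ N, ∃ QW ⊆ W, (∀ v ∈ QN, t < dg G v QW) ∧ (∀ s ∈ QW, q < dg G s QN) ∧
      ∑ v ∈ N, dg G v W + t * QN.card + q * QW.card ≤
        ∑ v ∈ QN, dg G v QW + t * N.card + q * W.card := by
  intro m
  induction m with
  | zero =>
    intro N W h
    have hN : N = ∅ := Finset.card_eq_zero.1 (by omega)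
    have hW : W = ∅ := Finset.card_eq_zero.1 (by omega)
    subst hN hW
    exact ⟨∅, by simp, ∅, by simp, by simp, by simp, by simp⟩
  | succ m ih =>
    intro N W h
    by_cases h1 : ∃ v ∈ N, dg G v W ≤ t
    · obtain ⟨v, hv, hvt⟩ := h1
      have hc := Finset.card_erase_add_one hv
      obtain ⟨QN, hQN, QW, hQW, a, b, c⟩ := ih (N.erase v) W (by omega)
      refine ⟨QN, hQN.trans (Finset.erase_subset _ _), QW, hQW, a, b, ?_⟩
      rw [← Finset.add_sum_erase N _ hv, ← hc]
      nlinarith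
    by_cases h2 : ∃ s ∈ W, dg G s N ≤ q
    · obtain ⟨v, hv, hvt⟩ := h2
      have hc := Finset.card_erase_add_one hv
      obtain ⟨QN, hQN, QW, hQW, a, b, c⟩ := ih N (W.erase v) (by omega)
      refine ⟨QN, hQN, QW, hQW.trans (Finset.erase_subset _ _), a, b, ?_⟩
      rw [dg_comm] at c ⊢
      rw [← Finset.add_sum_erase W _ hv, ← hc]
      nlinarith
    push Not at h1 h2
    exact ⟨N, subset_rfl, W, subset_rfl, h1, h2, le_rfl⟩

/-- Alternating path in the core. -/
lemma altpath (G : SimpleGraph V) (N W QN QW : Finset V) (hd : Disjoint N W)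
    (hQN : QN ⊆ N) (hQW : QW ⊆ W) (k τ : ℕ) (hτ : k ≤ τ + 1)
    (h1 : ∀ v ∈ QN, τ < dg G v QW) (h2 : ∀ s ∈ QW, k + 1 < dg G s QN)
    (b v : V) (rest : List V) (hv : v ∈ QN) (hch : (v :: rest).IsChain G.Adj)
    (hnd : (v :: rest).Nodup) (hb : b ∈ N) (hbr : b ∉ v :: rest)
    (hrest : rest.length ≤ 1) (hrN : ∀ x ∈ rest, x ∈ N) :
    ∀ j, j + 1 ≤ k → ∃ x t, x ∈ QN ∧ (x :: t).length = (v :: rest).length + 2 * j ∧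
      (x :: t).IsChain G.Adj ∧ (x :: t).Nodup ∧ b ∉ x :: t ∧
      (∀ z ∈ x :: t, z ∈ N ∨ z ∈ W) ∧
      (v :: rest) <:+ (x :: t) ∧
      ((x :: t).toFinset ∩ W).card ≤ j ∧ ((x :: t).toFinset ∩ N).card ≤ j + 2 := by
  intro j
  induction j with
  | zero =>
    intro _
    refine ⟨v, rest, hv, by simp, hch, hnd, hbr, ?_, List.suffix_refl _, ?_, ?_⟩
    · intro z hz
      rcases List.mem_cons.1 hz with rfl | hz
      · exact Or.inl (hQN hv)
      · exact Or.inl (hrN z hz)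
    · rw [Nat.le_zero, Finset.card_eq_zero, ← Finset.disjoint_iff_inter_eq_empty]
      refine Finset.disjoint_of_subset_left ?_ hd
      intro z hz
      simp at hz
      rcases hz with rfl | hz
      · exact hQN hv
      · exact hrN z hz
    · refine (Finset.card_le_card Finset.inter_subset_left).trans ?_
      refine (List.toFinset_card_le _).trans ?_
      simp; omega
  | succ j ih =>
    intro hj
    obtain ⟨x, t, hx, hlen, hch', hnd', hb', hmem, hsuf, hcW, hcN⟩ := ih (by omega)
    have e1 : ((x :: t).toFinset ∩ QW).card < dg G x QW := by
      have := h1 x hx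
      have h3 : ((x :: t).toFinset ∩ QW).card ≤ ((x :: t).toFinset ∩ W).card :=
        Finset.card_le_card (Finset.inter_subset_inter_left hQW)
      omega
    obtain ⟨s, hs, hxs, hsn⟩ := dg_exists G x QW _ e1
    have e2 : ((insert b (x :: t).toFinset) ∩ QN).card < dg G s QN := by
      have := h2 s hs
      have h3 : ((insert b (x :: t).toFinset) ∩ QN).card ≤
          (insert b ((x :: t).toFinset ∩ N)).card := by
        apply Finset.card_le_card
        intro z hz
        rw [Finset.mem_inter, Finset.mem_insert] at hz
        rw [Finset.mem_insert, Finset.mem_inter]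
        rcases hz with ⟨h | h, h'⟩
        · exact Or.inl h
        · exact Or.inr ⟨h, hQN h'⟩
      have h4 := Finset.card_insert_le b ((x :: t).toFinset ∩ N)
      omega
    obtain ⟨y, hy, hsy, hyn⟩ := dg_exists G s QN _ e2
    rw [Finset.mem_insert] at hyn
    push Not at hyn
    have hsW : s ∈ W := hQW hs
    have hyN : y ∈ N := hQN hy
    have hsN : s ∉ N := fun h => Finset.disjoint_left.1 hd h hsW
    have hyW : y ∉ W := fun h => Finset.disjoint_left.1 hd hyN h
    have hsl : s ∉ x :: t := fun h => hsn (List.mem_toFinset.2 h)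
    have hyl : y ∉ x :: t := fun h => hyn.2 (List.mem_toFinset.2 h)
    refine ⟨y, s :: x :: t, hy, by simp at hlen ⊢; omega, ?_, ?_, ?_, ?_, ?_, ?_, ?_⟩
    · exact List.IsChain.cons_cons hsy.symm (List.IsChain.cons_cons hxs.symm hch')
    · rw [List.nodup_cons, List.nodup_cons]
      refine ⟨?_, hsl, hnd'⟩
      rw [List.mem_cons]
      rintro (h | h)
      · subst h; exact hsN hyN
      · exact hyl h
    · rw [List.mem_cons, List.mem_cons]
      rintro (h | h | h)
      · exact hyn.1 h.symm
      · subst h; exact hsN hb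
      · exact hb' h
    · intro z hz
      rw [List.mem_cons, List.mem_cons] at hz
      rcases hz with rfl | rfl | hz
      · exact Or.inl hyN
      · exact Or.inr hsW
      · exact hmem z hz
    · exact (hsuf.trans (List.suffix_cons _ _)).trans (List.suffix_cons _ _)
    · rw [List.toFinset_cons, List.toFinset_cons, Finset.insert_inter_of_notMem hyW,
        Finset.insert_inter_of_mem hsW]
      exact (Finset.card_insert_le _ _).trans (by omega)
    · rw [List.toFinset_cons, List.toFinset_cons, Finset.insert_inter_of_mem hyN,
        Finset.insert_inter_of_notMem hsN]
      exact (Finset.card_insert_le _ _).trans (by omega)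

lemma getElem_of_suffix (l : List V) (z : V) (i : ℕ) (h : [z] <:+ l) (hi : l.length = i + 1) :
    l[i]'(by omega) = z := by
  obtain ⟨s, rfl⟩ := h
  simp at hi
  subst hi
  simp

lemma factOne (G : SimpleGraph V) (r k t : ℕ) (hrk : r + 1 = 2 * k)
    (hfree : ¬ Contains G (theta r)) (u : V) (N W QN QW : Finset V) (hd : Disjoint N W)
    (hN : ∀ v ∈ N, G.Adj u v) (huW : u ∉ W) (hQN : QN ⊆ N) (hQW : QW ⊆ W) (ht : k ≤ t + 1)
    (h1 : ∀ v ∈ QN, t < dg G v QW) (h2 : ∀ s ∈ QW, k + 1 < dg G s QN)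
    (v w w' : V) (hv : v ∈ QN) (hw : w ∈ N) (hw' : w' ∈ N) (hvw : G.Adj v w)
    (hww' : G.Adj w w') : w' = v := by
  by_contra hne
  have huN : u ∉ N := fun h => (hN u h).ne rfl
  obtain ⟨x, l, hx, hlen, hch, hnd, hb, hmem, hsuf, -, -⟩ := altpath G N W QN QW hd hQN hQW k t ht
    h1 h2 w' v [w] hv (by simpa using hvw) (by simpa using hvw.ne) hw'
    (by simp; exact ⟨hne, hww'.ne'⟩) (by simp) (by simpa using hw) (k - 1) (by omega)
  simp at hlen
  apply hfree
  have hlen' : (u :: x :: l).length = r + 1 + 1 := by simp; omega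
  have hlast : (u :: x :: l)[r+1]'(by omega) = w := by
    refine getElem_of_suffix _ _ _ ?_ hlen'
    exact ((List.suffix_cons v [w]).trans hsuf).trans (List.suffix_cons _ _)
  refine theta_of_list G r (u :: x :: l) w' hlen' ?_ ?_ ?_ ?_ ?_ ?_
  · exact List.IsChain.cons_cons (hN x (hQN hx)) hch
  · rw [List.nodup_cons]
    refine ⟨fun h => ?_, hnd⟩
    rcases hmem u h with h | h
    · exact huN h
    · exact huW h
  · rw [hlast]; simpa using hN w hw
  · rw [List.mem_cons]
    rintro (h | h)
    · subst h; exact huN hw'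
    · exact hb h
  · simpa using (hN w' hw').symm
  · rw [hlast]; exact hww'.symm

lemma factTwo (G : SimpleGraph V) (r k t : ℕ) (hrk : r + 1 = 2 * k)
    (hfree : ¬ Contains G (theta r)) (u : V) (N W QN QW : Finset V) (hd : Disjoint N W)
    (hN : ∀ v ∈ N, G.Adj u v) (huW : u ∉ W) (hQN : QN ⊆ N) (hQW : QW ⊆ W) (ht : k ≤ t + 1)
    (h1 : ∀ v ∈ QN, t < dg G v QW) (h2 : ∀ s ∈ QW, k + 1 < dg G s QN)
    (v w : V) (hv : v ∈ QN) (hw : w ∈ QN) (hvw : G.Adj v w) :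
    dg G w QW + (t + 2 - k) ≤ QW.card := by
  by_contra hcon
  have huN : u ∉ N := fun h => (hN u h).ne rfl
  obtain ⟨x, l, hx, hlen, hch, hnd, hb, hmem, hsuf, hcW, -⟩ :=
    altpath G N W QN QW hd hQN hQW k t ht
    h1 h2 w v [] hv (by simp) (by simp) (hQN hw)
    (by simp; exact hvw.ne') (by simp) (by simp) (k - 1) (by omega)
  simp at hlen
  have e1 : (((x :: l).toFinset ∪ QW.filter (fun s => ¬ G.Adj w s)) ∩ QW).card < dg G x QW := by
    have h3 := h1 x hx
    have h4 : (QW.filter (fun s => ¬ G.Adj w s)).card + dg G w QW = QW.card := by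
      unfold dg
      rw [add_comm]
      exact Finset.card_filter_add_card_filter_not _
    have h5 : (((x :: l).toFinset ∪ QW.filter (fun s => ¬ G.Adj w s)) ∩ QW).card ≤
        ((x :: l).toFinset ∩ W).card + (QW.filter (fun s => ¬ G.Adj w s)).card := by
      refine le_trans (Finset.card_le_card ?_) (Finset.card_union_le _ _)
      intro z hz
      rw [Finset.mem_inter, Finset.mem_union] at hz
      rw [Finset.mem_union, Finset.mem_inter]
      rcases hz with ⟨h | h, h'⟩
      · exact Or.inl ⟨h, hQW h'⟩
      · exact Or.inr h
    omega
  obtain ⟨s, hs, hxs, hsn⟩ := dg_exists G x QW _ e1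
  rw [Finset.mem_union] at hsn
  push Not at hsn
  have hws : G.Adj w s := by
    by_contra h
    exact hsn.2 (Finset.mem_filter.2 ⟨hs, h⟩)
  have hsl : s ∉ x :: l := fun h => hsn.1 (List.mem_toFinset.2 h)
  apply hfree
  have hlen' : (w :: s :: x :: l).length = r + 1 + 1 := by simp; omega
  have hlast : (w :: s :: x :: l)[r+1]'(by omega) = v := by
    refine getElem_of_suffix _ _ _ ?_ hlen'
    exact (hsuf.trans (List.suffix_cons _ _)).trans (List.suffix_cons _ _)
  refine theta_of_list G r (w :: s :: x :: l) u hlen' ?_ ?_ ?_ ?_ ?_ ?_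
  · exact List.IsChain.cons_cons hws (List.IsChain.cons_cons hxs.symm hch)
  · rw [List.nodup_cons, List.nodup_cons]
    refine ⟨?_, hsl, hnd⟩
    rw [List.mem_cons]
    rintro (h | h)
    · exact hws.ne h
    · exact hb h
  · rw [hlast]; simpa using hvw.symm
  · rw [List.mem_cons, List.mem_cons]
    rintro (h | h | h)
    · exact (hN w (hQN hw)).ne h
    · subst h; exact huW (hQW hs)
    · rcases hmem u h with h | h
      · exact huN h
      · exact huW h
  · simpa using hN w (hQN hw)
  · rw [hlast]; exact hN v (hQN hv)

/-- The main accounting inequality. -/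
lemma account (G : SimpleGraph V) (r k t D : ℕ) (hrk : r + 1 = 2 * k) (hD : 2 ≤ D)
    (hfree : ¬ Contains G (theta r)) (u : V) (N W : Finset V) (hd : Disjoint N W)
    (hN : ∀ v ∈ N, G.Adj u v) (huW : u ∉ W) (ht : k ≤ t + 1)
    (hdeg : ∀ s ⊆ N, ∑ v ∈ s, dg G v s ≤ D * s.card) :
    ∃ qN qW z : ℕ, qN ≤ N.card ∧ qW ≤ W.card ∧
      (qN = N.card → (∀ v ∈ N, dg G v N ≤ 1) ∧ z = ∑ v ∈ N, dg G v N) ∧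
      ∑ v ∈ N, dg G v W + ∑ v ∈ N, dg G v N + (t + 1 - k) * z ≤
        qN * qW + (t + D) * (N.card - qN) + (k + 1) * (W.card - qW) := by
  obtain ⟨QN, hQN, QW, hQW, h1, h2, h3⟩ := core G t (k + 1) _ N W rfl
  have F1 := factOne G r k t hrk hfree u N W QN QW hd hN huW hQN hQW ht h1 h2
  have F2 := factTwo G r k t hrk hfree u N W QN QW hd hN huW hQN hQW ht h1 h2
  have hone : ∀ v ∈ QN, ∀ w ∈ N, G.Adj v w → dg G w N = 1 := by
    intro v hv w hw hvw
    unfold dg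
    rw [Finset.card_eq_one]
    refine ⟨v, ?_⟩
    ext z
    rw [Finset.mem_filter, Finset.mem_singleton]
    constructor
    · rintro ⟨hz, hwz⟩; exact F1 v w z hv hw hz hvw hwz
    · rintro rfl; exact ⟨hQN hv, hvw.symm⟩
  have hsplit : N = QN ∪ (N \ QN) := (Finset.union_sdiff_of_subset hQN).symm
  have hdis : Disjoint QN (N \ QN) := Finset.disjoint_sdiff
  have hcard : (N \ QN).card + QN.card = N.card := by
    rw [add_comm]
    conv_rhs => rw [hsplit]
    rw [Finset.card_union_of_disjoint hdis]
  have hdgsplit : ∀ v, dg G v N = dg G v QN + dg G v (N \ QN) := by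
    intro v
    conv_lhs => rw [hsplit]
    exact dg_union G v hdis
  set P := N \ QN with hP
  have hsum : ∑ v ∈ N, dg G v N =
      ∑ v ∈ QN, dg G v QN + 2 * ∑ v ∈ P, dg G v QN + ∑ v ∈ P, dg G v P := by
    conv_lhs => rw [hsplit]
    rw [Finset.sum_union hdis, ← hsplit]
    simp only [hdgsplit]
    rw [Finset.sum_add_distrib, Finset.sum_add_distrib, dg_comm G QN P]
    ring
  -- the deleted part
  have hPpart : 2 * ∑ v ∈ P, dg G v QN + ∑ v ∈ P, dg G v P ≤ D * P.card := by
    set L := P.filter (fun v => 0 < dg G v QN) with hL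
    have hLP : L ⊆ P := Finset.filter_subset _ _
    have hLfact : ∀ v ∈ L, dg G v QN = 1 ∧ dg G v P = 0 := by
      intro v hv
      obtain ⟨hvP, hpos⟩ := Finset.mem_filter.1 hv
      obtain ⟨q, hq, hvq⟩ := (dg_pos G v QN).1 hpos
      have := hone q hq v (Finset.sdiff_subset hvP) hvq.symm
      rw [hdgsplit] at this
      omega
    have hnL : ∀ v ∈ P \ L, dg G v QN = 0 ∧ dg G v P = dg G v (P \ L) := by
      intro v hv
      obtain ⟨hvP, hvL⟩ := Finset.mem_sdiff.1 hv
      refine ⟨?_, ?_⟩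
      · by_contra h
        exact hvL (Finset.mem_filter.2 ⟨hvP, Nat.pos_of_ne_zero h⟩)
      · have e : P = L ∪ (P \ L) := (Finset.union_sdiff_of_subset hLP).symm
        conv_lhs => rw [e]
        rw [dg_union G v Finset.disjoint_sdiff]
        have : dg G v L = 0 := by
          by_contra h
          obtain ⟨w, hw, hvw⟩ := (dg_pos G v L).1 (Nat.pos_of_ne_zero h)
          have h5 := (hLfact w hw).2
          have h6 := (dg_pos G w P).2 ⟨v, hvP, hvw.symm⟩
          omega
        omega
    have s1 : ∑ v ∈ P, dg G v QN = L.card := by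
      rw [← Finset.sum_sdiff hLP, Finset.sum_congr rfl (fun v hv => (hnL v hv).1),
        Finset.sum_congr rfl (fun v hv => (hLfact v hv).1)]
      simp
    have s2 : ∑ v ∈ P, dg G v P = ∑ v ∈ P \ L, dg G v (P \ L) := by
      rw [← Finset.sum_sdiff hLP, Finset.sum_congr rfl (fun v hv => (hnL v hv).2),
        Finset.sum_congr rfl (fun v hv => (hLfact v hv).2)]
      simp
    have s3 := hdeg (P \ L) (Finset.sdiff_subset.trans Finset.sdiff_subset)
    have s4 : (P \ L).card + L.card = P.card := Finset.card_sdiff_add_card_eq_card hLP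
    rw [s1, s2, ← s4]
    nlinarith
  have hQpart : ∑ v ∈ QN, dg G v QW + (t + 2 - k) * ∑ v ∈ QN, dg G v QN ≤ QN.card * QW.card := by
    rw [Finset.mul_sum, ← Finset.sum_add_distrib, ← smul_eq_mul, ← Finset.sum_const]
    refine Finset.sum_le_sum fun v hv => ?_
    rcases Nat.eq_zero_or_pos (dg G v QN) with h | h
    · rw [h]; simpa using dg_le G v QW
    · obtain ⟨w, hw, hvw⟩ := (dg_pos G v QN).1 h
      have h5 := hone w hw v (hQN hv) hvw.symm
      rw [hdgsplit] at h5
      have h6 : dg G v QN = 1 := by omega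
      rw [h6, mul_one]
      exact F2 w v hw hv hvw.symm
  refine ⟨QN.card, QW.card, ∑ v ∈ QN, dg G v QN, Finset.card_le_card hQN,
    Finset.card_le_card hQW, ?_, ?_⟩
  · intro he
    have hQ : QN = N := Finset.eq_of_subset_of_card_le hQN he.ge
    refine ⟨?_, by rw [hQ]⟩
    intro v hv
    rcases Nat.eq_zero_or_pos (dg G v N) with h | h
    · omega
    · obtain ⟨w, hw, hvw⟩ := (dg_pos G v N).1 h
      exact (hone w (by rw [hQ]; exact hw) v hv hvw.symm).le
  · have e1 : N.card - QN.card = P.card := by omega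
    obtain ⟨y, hy⟩ := Nat.exists_eq_add_of_le (Finset.card_le_card hQW)
    have e2 : W.card - QW.card = y := by omega
    have e3 : t + 2 - k = (t + 1 - k) + 1 := by omega
    rw [e1, e2, hsum]
    rw [e3] at hQpart
    rw [← hcard, hy] at h3
    nlinarith

lemma floorBound (n : ℕ) : n * n ≤ 4 * ((n / 2) * ((n + 1) / 2)) + 1 := by
  rcases Nat.even_or_odd' n with ⟨m, rfl | rfl⟩
  · rw [show 2 * m / 2 = m by omega, show (2 * m + 1) / 2 = m by omega]; nlinarith
  · rw [show (2 * m + 1) / 2 = m by omega, show (2 * m + 1 + 1) / 2 = m + 1 by omega]; nlinarith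

lemma floorUpper (a b n : ℕ) (h : a + b = n) : a * b ≤ (n / 2) * ((n + 1) / 2) := by
  have h1 := floorBound n
  have h2 : 4 * (a * b) ≤ n * n := by
    subst h
    rcases le_total a b with h | h
    · obtain ⟨c, rfl⟩ := Nat.exists_eq_add_of_le h; nlinarith
    · obtain ⟨c, rfl⟩ := Nat.exists_eq_add_of_le h; nlinarith
  omega

lemma numeric (k d w p y C : ℤ) (hk : 2 ≤ k) (hw : 2 ≤ w) (hn : 20 * k - 10 ≤ 1 + d + w)
    (hp : 1 ≤ p) (hpd : p ≤ d) (hy : 0 ≤ y) (hyw : y ≤ w) (hC : C ≤ 5 * k - 3) :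
    4 * (d + (d - p) * (w - y) + C * p + (k + 1) * y) + 1 < (1 + d + w) * (1 + d + w) := by
  have hC' : C * p ≤ (5 * k - 3) * p := by nlinarith
  -- the four corners
  have c1 : 4 * ((5 * k - 2) * d + (k + 1) * w) + 1 < (1 + d + w) * (1 + d + w) := by
    obtain ⟨e, he⟩ : ∃ e, 1 + d + w = 20 * k - 10 + e := ⟨1 + d + w - (20 * k - 10), by ring⟩
    have he0 : 0 ≤ e := by omega
    have hd' : d = 20 * k - 11 + e - w := by omega
    rw [he, hd']
    rcases he0.eq_or_lt with h | h
    · subst h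
      nlinarith [mul_nonneg (by omega : (0:ℤ) ≤ 4 * k - 3) (by omega : (0:ℤ) ≤ w - 2)]
    · nlinarith [mul_nonneg (by omega : (0:ℤ) ≤ 4 * k - 3) (by omega : (0:ℤ) ≤ w - 2), mul_pos h (by omega : (0:ℤ) < k)]
  have c2 : 4 * (d + (5 * k - 3) + (k + 1) * w) + 1 < (1 + d + w) * (1 + d + w) := by
    nlinarith
  have c3 : 4 * (d + (d - 1) * w + (5 * k - 3)) + 1 < (1 + d + w) * (1 + d + w) := by
    rcases le_or_gt w (5 * k - 3) with h | h
    · have : 10 * k - 6 ≤ d - w - 1 := by omega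
      nlinarith
    · nlinarith [sq_nonneg (d - w - 1)]
  rcases le_or_gt (w - y) (5 * k - 3) with h | h
  · have : (d - p) * (w - y) + (5 * k - 3) * p ≤ (5 * k - 3) * d := by
      nlinarith [mul_nonneg (by omega : 0 ≤ d - p) (by omega : 0 ≤ 5 * k - 3 - (w - y))]
    nlinarith
  · have : (d - p) * (w - y) + (5 * k - 3) * p ≤ (d - 1) * (w - y) + (5 * k - 3) := by
      nlinarith
    rcases le_or_gt (k + 1) (d - 1) with h' | h'
    · nlinarith [mul_nonneg hy (by omega : 0 ≤ d - 1 - (k + 1))]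
    · nlinarith [mul_nonneg (by omega : 0 ≤ w - y) (by omega : 0 ≤ (k + 1) - (d - 1))]

set_option maxHeartbeats 1000000 in
/-- The neighbourhood of a vertex with many 2-walks is independent. -/
lemma comb [Fintype V] (G : SimpleGraph V) (r : ℕ) (hr : 1 ≤ r) (hodd : Odd r)
    (hn : 10 * r ≤ Fintype.card V)
    (hfree : ¬ Contains G (theta r)) (u : V) (N W : Finset V) (hd : Disjoint N W)
    (hN : ∀ v ∈ N, G.Adj u v) (huW : u ∉ W)
    (hcard : 1 + N.card + W.card = Fintype.card V)
    (hF : (Fintype.card V / 2) * ((Fintype.card V + 1) / 2) ≤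
      N.card + ∑ v ∈ N, dg G v W + ∑ v ∈ N, dg G v N)
    (hF2 : (Fintype.card V / 2) * ((Fintype.card V + 1) / 2) ≤ N.card * N.card) :
    ∀ v ∈ N, dg G v N = 0 := by
  suffices hz : ∑ v ∈ N, dg G v N = 0 from fun v hv => (Finset.sum_eq_zero_iff.1 hz) v hv
  by_contra hpos
  have hpos : 0 < ∑ v ∈ N, dg G v N := Nat.pos_of_ne_zero hpos
  have hup := floorUpper N.card (W.card + 1) (Fintype.card V) (by omega)
  have hlo := floorBound (Fintype.card V)
  have hdegen : ∀ s ⊆ N, ∑ v ∈ s, dg G v s ≤ 2 * r * s.card :=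
    fun s hs => degen G r u hfree s (fun v hv => hN v (hs hv))
  have hmono : ∀ v, ∀ s ⊆ N, dg G v s ≤ dg G v N := fun v s hs =>
    Finset.card_le_card (Finset.filter_subset_filter _ hs)
  have heW : ∑ v ∈ N, dg G v W ≤ N.card * W.card := by
    rw [← smul_eq_mul, ← Finset.sum_const]
    exact Finset.sum_le_sum fun v _ => dg_le G v W
  obtain ⟨k', hk'⟩ := hodd
  obtain ⟨k, hk⟩ : ∃ k, k = k' + 1 := ⟨_, rfl⟩
  have hrk : r + 1 = 2 * k := by omega
  set n := Fintype.card V with hn_def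
  set F := (n / 2) * ((n + 1) / 2) with hF_def
  set e := ∑ v ∈ N, dg G v W with he_def
  set q := ∑ v ∈ N, dg G v N with hq_def
  have hdk : k + 1 ≤ N.card := by
    by_contra h
    have : N.card ≤ k := by omega
    nlinarith
  rcases Nat.lt_or_ge k 2 with hk2 | hk2
  · -- r = 1
    have hr1 : r = 1 := by omega
    subst hr1
    have hmatch : ∀ v ∈ N, dg G v N ≤ 1 := by
      intro v hv
      by_contra h
      unfold dg at h
      push Not at h
      obtain ⟨a, ha, b, hb, hab⟩ := Finset.one_lt_card.1 h
      rw [Finset.mem_filter] at ha hb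
      apply hfree
      have hau := hN a ha.1
      have hbu := hN b hb.1
      have hvu := hN v hv
      refine theta_of_list G 1 [v, a, u] b (by simp) ?_ ?_ ?_ ?_ ?_ ?_
      · simpa using ⟨ha.2, hau.symm⟩
      · simpa using ⟨⟨ha.2.ne, hvu.ne'⟩, hau.ne'⟩
      · simpa using hvu.symm
      · simpa using ⟨hb.2.ne', hab.symm, hbu.ne'⟩
      · simpa using hb.2.symm
      · simpa using hbu.symm
    have hcommon : ∀ v ∈ N, ∀ w ∈ N, G.Adj v w → dg G v W + dg G w W ≤ W.card := by
      intro v hv w hw hvw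
      unfold dg
      rw [← Finset.card_union_of_disjoint]
      · exact Finset.card_le_card (Finset.union_subset (Finset.filter_subset _ _)
          (Finset.filter_subset _ _))
      · rw [Finset.disjoint_left]
        intro s hs hs'
        rw [Finset.mem_filter] at hs hs'
        apply hfree
        have hus : u ≠ s := by rintro rfl; exact huW hs.1
        refine theta_of_list G 1 [v, s, w] u (by simp) ?_ ?_ ?_ ?_ ?_ ?_
        · simpa using ⟨hs.2, hs'.2.symm⟩
        · simpa using ⟨⟨hs.2.ne, hvw.ne⟩, hs'.2.ne'⟩
        · simpa using hvw
        · simpa using ⟨(hN v hv).ne, hus, (hN w hw).ne⟩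
        · simpa using hN v hv
        · simpa using hN w hw
    -- sum over matched vertices
    have hdouble : 2 * e + q * W.card ≤ 2 * (N.card * W.card) := by
      have s1 : ∑ v ∈ N, dg G v N * dg G v W = ∑ v ∈ N, ∑ w ∈ N.filter (G.Adj v), dg G w W := by
        have : ∀ v ∈ N, dg G v N * dg G v W = ∑ w ∈ N, if G.Adj w v then dg G v W else 0 := by
          intro v _
          rw [dg_eq_sum G v N, Finset.sum_mul]
          refine Finset.sum_congr rfl fun w _ => ?_
          simp only [G.adj_comm]
          split_ifs <;> simp
        rw [Finset.sum_congr rfl this, Finset.sum_comm]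
        refine Finset.sum_congr rfl fun v _ => ?_
        rw [Finset.sum_filter]
      have s2 : 2 * ∑ v ∈ N, dg G v N * dg G v W ≤ q * W.card := by
        have : ∀ v ∈ N, dg G v N * dg G v W + ∑ w ∈ N.filter (G.Adj v), dg G w W
            ≤ dg G v N * W.card := by
          intro v hv
          unfold dg
          rw [← smul_eq_mul, ← smul_eq_mul, ← Finset.sum_const, ← Finset.sum_const,
            ← Finset.sum_add_distrib]
          refine Finset.sum_le_sum fun w hw => ?_
          rw [Finset.mem_filter] at hw
          exact hcommon v hv w hw.1 hw.2
        have := Finset.sum_le_sum this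
        rw [Finset.sum_add_distrib, ← s1, ← Finset.sum_mul] at this
        change _ ≤ q * W.card at this
        omega
      have s3 : ∑ v ∈ N, (dg G v W + dg G v N * W.card) ≤
          ∑ v ∈ N, (W.card + dg G v N * dg G v W) := by
        refine Finset.sum_le_sum fun v hv => ?_
        have h1 := hmatch v hv
        have h2 := dg_le G v W
        interval_cases h : dg G v N
        · simpa using h2
        · omega
      rw [Finset.sum_add_distrib, Finset.sum_add_distrib, ← Finset.sum_mul, Finset.sum_const,
        smul_eq_mul] at s3
      change e + q * W.card ≤ _ at s3
      omega
    have hqd : q ≤ N.card := by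
      have := Finset.sum_le_sum hmatch
      simpa using this
    rcases Nat.lt_or_ge W.card 3 with hw | hw
    · interval_cases h : W.card
      · have : n = N.card + 1 := by omega
        rw [this] at hlo hn; nlinarith
      · have : n = N.card + 2 := by omega
        rw [this] at hlo hn; nlinarith
      · have : n = N.card + 3 := by omega
        rw [this] at hlo hn; nlinarith
    · have h3 : q * 3 ≤ q * W.card := Nat.mul_le_mul_left _ hw
      rw [Nat.mul_add, Nat.mul_one] at hup
      omega
  · -- general case
    have hnk : 20 * k - 10 ≤ n := by omega
    have hW2 : 2 ≤ W.card := by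
      by_contra h
      have hq2 := hdegen N subset_rfl
      have hr2 : 2 * r = 4 * k - 2 := by omega
      obtain ⟨j, hj⟩ : ∃ j, k = j + 2 := ⟨k - 2, by omega⟩
      have hr3 : 2 * r = 4 * j + 6 := by omega
      rw [hr3] at hq2
      change q ≤ _ at hq2
      interval_cases hw : W.card
      · have : n = N.card + 1 := by omega
        rw [this] at hlo hnk
        have h5 : 20 * j + 29 ≤ N.card := by omega
        nlinarith
      · have : n = N.card + 2 := by omega
        rw [this] at hlo hnk
        have h5 : 20 * j + 28 ≤ N.card := by omega
        nlinarith
    obtain ⟨a, b, z, ha, hb, hz, hmain⟩ := account G r k (k - 1) (2 * r) hrk (by omega) hfree u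
      N W hd hN huW (by omega) hdegen
    change e + q + _ ≤ _ at hmain
    have key : ∀ t D a b z : ℕ, t + D ≤ 5 * k - 3 → a ≤ N.card → b ≤ W.card →
        e + q + z ≤ a * b + (t + D) * (N.card - a) + (k + 1) * (W.card - b) → a = N.card := by
      intro t D a b z htD ha hb h
      by_contra hne
      obtain ⟨p, hp⟩ := Nat.exists_eq_add_of_le ha
      obtain ⟨y, hy⟩ := Nat.exists_eq_add_of_le hb
      have hh := numeric k N.card W.card p y (t + D) (by omega) (by omega) (by omega) (by omega)
        (by omega) (by omega) (by omega) (by omega)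
      rw [show N.card - a = p by omega, show W.card - b = y by omega] at h
      rw [show (N.card : ℤ) - p = a by omega, show (W.card : ℤ) - y = b by omega] at hh
      have hh' : 4 * (N.card + a * b + (t + D) * p + (k + 1) * y) + 1 < n * n := by
        rw [← hcard]; exact_mod_cast hh
      omega
    have ha' := key (k - 1) (2 * r) a b _ (by omega) ha hb hmain
    obtain ⟨hmatch, -⟩ := hz ha'
    have hdeg2 : ∀ s ⊆ N, ∑ v ∈ s, dg G v s ≤ 2 * s.card := by
      intro s hs
      have : ∑ v ∈ s, dg G v s ≤ ∑ v ∈ s, 1 :=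
        Finset.sum_le_sum fun v hv => (hmono v s hs).trans (hmatch v (hs hv))
      simp at this
      omega
    obtain ⟨a, b, z, ha, hb, hz, hmain⟩ := account G r k k 2 hrk le_rfl hfree u
      N W hd hN huW (by omega) hdeg2
    change e + q + _ ≤ _ at hmain
    have ha' := key k 2 a b _ (by omega) ha hb hmain
    obtain ⟨-, hzq⟩ := hz ha'
    change z = q at hzq
    subst ha'
    obtain ⟨y, hy⟩ := Nat.exists_eq_add_of_le hb
    rw [show W.card - b = y by omega, hzq, show k + 1 - k = 1 by omega] at hmain
    rw [hy] at hup
    rw [one_mul, Nat.sub_self, Nat.mul_zero, Nat.add_zero] at hmain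
    have h7 : (k + 1) * y ≤ N.card * y := Nat.mul_le_mul_right _ hdk
    rw [Nat.mul_add, Nat.mul_add, Nat.mul_one] at hup
    omega

lemma spec [Fintype V] (G : SimpleGraph V) (r : ℕ) (hr : 1 ≤ r) (hodd : Odd r)
    (hn : 10 * r ≤ Fintype.card V) (hfree : ¬ Contains G (theta r)) (l : ℝ) (v : V → ℝ)
    (hv : v ≠ 0) (hev : ∀ w, ∑ z ∈ univ.filter (G.Adj w), v z = l * v w)
    (hl : (((Fintype.card V / 2) * ((Fintype.card V + 1) / 2) : ℕ) : ℝ) ≤ l ^ 2) :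
    l ^ 2 = (((Fintype.card V / 2) * ((Fintype.card V + 1) / 2) : ℕ) : ℝ) ∧
    ∃ N : Finset V, N.card * (Fintype.card V - N.card) =
        (Fintype.card V / 2) * ((Fintype.card V + 1) / 2) ∧
      ∀ a b, G.Adj a b ↔ (a ∈ N ↔ b ∉ N) := by
  set F := (Fintype.card V / 2) * ((Fintype.card V + 1) / 2) with hF
  have hFpos : 0 < F := by
    rw [hF]; exact Nat.mul_pos (by omega) (by omega)
  have hne : Nonempty V := by
    rw [← Fintype.card_pos_iff]; omega
  obtain ⟨u, hu⟩ := Finite.exists_max (fun w => |v w|)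
  obtain ⟨M, hM⟩ : ∃ M, M = |v u| := ⟨_, rfl⟩
  have hyM : ∀ w, |v w| ≤ M := fun w => hM ▸ hu w
  have hMpos : 0 < M := by
    obtain ⟨w, hw⟩ := Function.ne_iff.1 hv
    exact lt_of_lt_of_le (abs_pos.2 hw) (hyM w)
  have step : ∀ w, |l| * |v w| ≤ ∑ z ∈ univ.filter (G.Adj w), |v z| := by
    intro w
    rw [← abs_mul, ← hev w]
    exact Finset.abs_sum_le_sum_abs _ _
  have two : ∀ u, |v u| = M → l ^ 2 * M ≤
      ∑ w ∈ univ.filter (G.Adj u), ∑ z ∈ univ.filter (G.Adj w), |v z| := by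
    intro u hu
    have h1 : |l| * (|l| * M) ≤ |l| * ∑ z ∈ univ.filter (G.Adj u), |v z| :=
      mul_le_mul_of_nonneg_left (hu ▸ step u) (abs_nonneg _)
    rw [Finset.mul_sum] at h1
    have h2 := h1.trans (Finset.sum_le_sum fun w _ => step w)
    calc l ^ 2 * M = |l| * (|l| * M) := by rw [← sq_abs l]; ring
      _ ≤ _ := h2
  have twoM : ∀ u, ∑ w ∈ univ.filter (G.Adj u), ∑ z ∈ univ.filter (G.Adj w), |v z| ≤
      ((∑ w ∈ univ.filter (G.Adj u), dg G w univ : ℕ) : ℝ) * M := by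
    intro u
    push_cast
    rw [Finset.sum_mul]
    refine Finset.sum_le_sum fun w _ => ?_
    have := Finset.sum_le_card_nsmul (univ.filter (G.Adj w)) (fun z => |v z|) M (fun z _ => hyM z)
    rw [nsmul_eq_mul] at this
    exact this
  -- neighbourhood decomposition
  have data : ∀ u, ∃ W : Finset V, (∀ z, z ∈ W ↔ z ≠ u ∧ ¬ G.Adj u z) ∧
      Disjoint (univ.filter (G.Adj u)) W ∧
      1 + (univ.filter (G.Adj u)).card + W.card = Fintype.card V ∧
      ∑ w ∈ univ.filter (G.Adj u), dg G w univ = (univ.filter (G.Adj u)).card +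
        ∑ w ∈ univ.filter (G.Adj u), dg G w W +
        ∑ w ∈ univ.filter (G.Adj u), dg G w (univ.filter (G.Adj u)) := by
    intro u
    have hmem : ∀ z, z ∈ univ.filter (fun z => z ≠ u ∧ ¬ G.Adj u z) ↔ z ≠ u ∧ ¬ G.Adj u z := by
      intro z; simp
    have hdis : Disjoint (univ.filter (G.Adj u)) (univ.filter (fun z => z ≠ u ∧ ¬ G.Adj u z)) := by
      rw [Finset.disjoint_left]
      intro z h1 h2
      exact ((hmem z).1 h2).2 (Finset.mem_filter.1 h1).2
    have hun : (univ : Finset V) =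
        insert u (univ.filter (G.Adj u) ∪ univ.filter (fun z => z ≠ u ∧ ¬ G.Adj u z)) := by
      ext z
      simp only [Finset.mem_univ, Finset.mem_insert, Finset.mem_union, Finset.mem_filter, true_and,
        true_iff]
      tauto
    have hunot : u ∉ univ.filter (G.Adj u) ∪ univ.filter (fun z => z ≠ u ∧ ¬ G.Adj u z) := by
      simp
    refine ⟨_, hmem, hdis, ?_, ?_⟩
    · rw [← Finset.card_univ, hun, Finset.card_insert_of_notMem hunot,
        Finset.card_union_of_disjoint hdis, ← hun]
      ring
    · rw [Finset.card_eq_sum_ones, ← Finset.sum_add_distrib, ← Finset.sum_add_distrib]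
      refine Finset.sum_congr rfl fun w hw => ?_
      have hw' := (Finset.mem_filter.1 hw).2
      have : dg G w univ = dg G w (insert u (univ.filter (G.Adj u) ∪
        univ.filter (fun z => z ≠ u ∧ ¬ G.Adj u z))) := by rw [← hun]
      rw [this, dg_insert G w u hunot, dg_union G w hdis, if_pos hw'.symm]
      ring
  have hcount : ∀ u, |v u| = M → l ^ 2 ≤ ((∑ w ∈ univ.filter (G.Adj u), dg G w univ : ℕ) : ℝ) :=
    fun u hu => le_of_mul_le_mul_right ((two u hu).trans (twoM u)) hMpos
  have indep : ∀ u, |v u| = M → ∀ w, G.Adj u w → dg G w (univ.filter (G.Adj u)) = 0 := by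
    intro u hu w hw
    obtain ⟨W, hW, hdis, hcard, hsum⟩ := data u
    refine comb G r hr hodd hn hfree u (univ.filter (G.Adj u)) W hdis
      (fun z hz => (Finset.mem_filter.1 hz).2) (fun h => ((hW u).1 h).1 rfl) hcard ?_ ?_ w
      (Finset.mem_filter.2 ⟨Finset.mem_univ _, hw⟩)
    · rw [← hsum]
      exact_mod_cast hl.trans (hcount u hu)
    · have h1 : |l| * M ≤ ((univ.filter (G.Adj u)).card : ℝ) * M := by
        have h2 := Finset.sum_le_card_nsmul (univ.filter (G.Adj u)) (fun z => |v z|) M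
          (fun z _ => hyM z)
        rw [nsmul_eq_mul] at h2
        exact (hu ▸ step u).trans h2
      have h3 := le_of_mul_le_mul_right h1 hMpos
      have h4 : l ^ 2 ≤ ((univ.filter (G.Adj u)).card : ℝ) * ((univ.filter (G.Adj u)).card : ℝ) := by
        rw [← sq_abs, sq]
        exact mul_le_mul h3 h3 (abs_nonneg _) (by positivity)
      exact_mod_cast hl.trans h4
  obtain ⟨W, hW, hdis, hcard, hsum⟩ := data u
  have hin := indep u hM.symm
  have hcu := hcount u hM.symm
  have htwo := two u hM.symm
  have htwoM := twoM u
  have hzero : ∑ w ∈ univ.filter (G.Adj u), dg G w (univ.filter (G.Adj u)) = 0 :=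
    Finset.sum_eq_zero fun w hw => hin w (Finset.mem_filter.1 hw).2
  rw [hzero, add_zero] at hsum
  have hle : ∀ w ∈ univ.filter (G.Adj u), dg G w W ≤ W.card := fun w _ => dg_le G w W
  have hsumle := Finset.sum_le_sum hle
  rw [Finset.sum_const, smul_eq_mul] at hsumle
  have hup := floorUpper (univ.filter (G.Adj u)).card (W.card + 1) (Fintype.card V) (by omega)
  rw [Nat.mul_add, Nat.mul_one] at hup
  have hFle : F ≤ ∑ w ∈ univ.filter (G.Adj u), dg G w univ := by
    exact_mod_cast hl.trans hcu
  have hsumF : ∑ w ∈ univ.filter (G.Adj u), dg G w univ = F := by omega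
  have hprod : (univ.filter (G.Adj u)).card * W.card + (univ.filter (G.Adj u)).card = F := by omega
  have hlF : l ^ 2 = (F : ℝ) := by
    refine le_antisymm ?_ hl
    rw [← hsumF]; exact hcu
  have hfull : ∀ w, G.Adj u w → ∀ z ∈ W, G.Adj w z := by
    have h1 : ∑ w ∈ univ.filter (G.Adj u), dg G w W = ∑ w ∈ univ.filter (G.Adj u), W.card := by
      rw [Finset.sum_const, smul_eq_mul]; omega
    have h2 := (Finset.sum_eq_sum_iff_of_le hle).1 h1
    intro w hw z hz
    have h3 := h2 w (Finset.mem_filter.2 ⟨Finset.mem_univ _, hw⟩)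
    have h4 : W.filter (G.Adj w) = W :=
      Finset.eq_of_subset_of_card_le (Finset.filter_subset _ _) h3.ge
    rw [← h4] at hz
    exact (Finset.mem_filter.1 hz).2
  have hNpos : 0 < (univ.filter (G.Adj u)).card := by
    by_contra h
    have : (univ.filter (G.Adj u)).card = 0 := by omega
    rw [this] at hprod
    omega
  obtain ⟨w0, hw0⟩ := Finset.card_pos.1 hNpos
  have hw0' := (Finset.mem_filter.1 hw0).2
  have hWmax : ∀ z ∈ W, |v z| = M := by
    intro z hz
    refine le_antisymm (hyM z) ?_
    have hnn : ∀ w ∈ univ.filter (G.Adj u), 0 ≤ ∑ z ∈ univ.filter (G.Adj w), (M - |v z|) :=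
      fun w _ => Finset.sum_nonneg fun z _ => sub_nonneg.2 (hyM z)
    have hle0 : ∑ w ∈ univ.filter (G.Adj u), ∑ z ∈ univ.filter (G.Adj w), (M - |v z|) ≤ 0 := by
      simp only [Finset.sum_sub_distrib, Finset.sum_const, nsmul_eq_mul]
      rw [← Finset.sum_mul, sub_nonpos]
      have : ∑ w ∈ univ.filter (G.Adj u), ((univ.filter (G.Adj w)).card : ℝ) = l ^ 2 := by
        rw [hlF, ← hsumF]; push_cast; rfl
      rw [this]
      exact htwo
    have h1 := (Finset.single_le_sum hnn hw0).trans hle0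
    have h2 := (Finset.single_le_sum (fun z _ => sub_nonneg.2 (hyM z))
      (Finset.mem_filter.2 ⟨Finset.mem_univ z, hfull w0 hw0' z hz⟩)).trans h1
    linarith
  have hWind : ∀ z ∈ W, ∀ z' ∈ W, ¬ G.Adj z z' := by
    intro z hz z' hz' hzz
    have h1 := indep z (hWmax z hz) w0 (hfull w0 hw0' z hz).symm
    have h2 := (dg_pos G w0 (univ.filter (G.Adj z))).2
      ⟨z', Finset.mem_filter.2 ⟨Finset.mem_univ _, hzz⟩, hfull w0 hw0' z' hz'⟩
    omega
  refine ⟨hlF, univ.filter (G.Adj u), ?_, ?_⟩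
  · rw [show Fintype.card V - (univ.filter (G.Adj u)).card = W.card + 1 by omega, Nat.mul_add,
      Nat.mul_one, hprod]
  · intro a b
    have hNN : ∀ a b, G.Adj u a → G.Adj u b → ¬ G.Adj a b := by
      intro a b ha hb hab
      have h1 := hin a ha
      have h2 := (dg_pos G a (univ.filter (G.Adj u))).2
        ⟨b, Finset.mem_filter.2 ⟨Finset.mem_univ _, hb⟩, hab⟩
      omega
    have hNc : ∀ a b, G.Adj u a → ¬ G.Adj u b → G.Adj a b := by
      intro a b ha hb
      by_cases h : b = u
      · subst h; exact ha.symm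
      · exact hfull a ha b ((hW b).2 ⟨h, hb⟩)
    have hcc : ∀ a b, ¬ G.Adj u a → ¬ G.Adj u b → ¬ G.Adj a b := by
      intro a b ha hb hab
      by_cases h : a = u
      · subst h; exact hb hab
      by_cases h' : b = u
      · subst h'; exact ha hab.symm
      exact hWind a ((hW a).2 ⟨h, ha⟩) b ((hW b).2 ⟨h', hb⟩) hab
    simp only [Finset.mem_filter, Finset.mem_univ, true_and]
    by_cases ha : G.Adj u a <;> by_cases hb : G.Adj u b
    · simp [ha, hb, hNN a b ha hb]
    · simp [ha, hb, hNc a b ha hb]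
    · simp [ha, hb, (hNc b a hb ha).symm]
    · simp [ha, hb, hcc a b ha hb]

end Comb

/-! ### Spectral part -/

lemma mem_spec_iff {n : ℕ} (G : SimpleGraph (Fin n)) (l : ℝ) :
    l ∈ spectrum ℝ (G.adjMatrix ℝ) ↔
      ∃ v : Fin n → ℝ, v ≠ 0 ∧ ∀ w, ∑ z ∈ univ.filter (G.Adj w), v z = l * v w := by
  rw [← Matrix.spectrum_toLin', ← Module.End.hasEigenvalue_iff_mem_spectrum]
  have key : ∀ v : Fin n → ℝ, Matrix.toLin' (G.adjMatrix ℝ) v = l • v ↔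
      ∀ w, ∑ z ∈ univ.filter (G.Adj w), v z = l * v w := by
    intro v
    rw [funext_iff]
    refine forall_congr' fun w => ?_
    rw [Matrix.toLin'_apply, SimpleGraph.adjMatrix_mulVec_apply, SimpleGraph.neighborFinset_eq_filter]
    simp
  constructor
  · intro h
    obtain ⟨v, hv⟩ := h.exists_hasEigenvector
    exact ⟨v, hv.2, (key v).1 hv.apply_eq_smul⟩
  · rintro ⟨v, hv, h⟩
    exact Module.End.hasEigenvalue_of_hasEigenvector
      (Module.End.hasEigenvector_iff.2 ⟨Module.End.mem_eigenspace_iff.2 ((key v).2 h), hv⟩)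

lemma turan_free (n r : ℕ) (hodd : Odd r) : ¬ Contains (turanGraph n 2) (theta r) := by
  rintro ⟨f, hf⟩
  have h1 := hf ⟨0, by omega⟩ ⟨r + 1, by omega⟩ (by simp [theta])
  have h2 := hf ⟨r + 2, by omega⟩ ⟨0, by omega⟩ (by simp [theta])
  have h3 := hf ⟨r + 2, by omega⟩ ⟨r + 1, by omega⟩ (by simp [theta])
  simp only [turanGraph_adj] at h1 h2 h3
  omega

lemma card_even (n : ℕ) : (univ.filter (fun v : Fin n => v.val % 2 = 0)).card = (n + 1) / 2 := by
  rw [Finset.card_filter, Fin.sum_univ_eq_sum_range (fun i => if i % 2 = 0 then 1 else 0) n]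
  induction n with
  | zero => simp
  | succ k ih =>
    rw [Finset.sum_range_succ, ih]
    split_ifs <;> omega

lemma card_odd (n : ℕ) : (univ.filter (fun v : Fin n => ¬ v.val % 2 = 0)).card = n / 2 := by
  have h := Finset.card_filter_add_card_filter_not (s := (univ : Finset (Fin n)))
    (fun v : Fin n => v.val % 2 = 0)
  rw [card_even, Finset.card_univ, Fintype.card_fin] at h
  omega

lemma turan_mem (n : ℕ) (hn : 10 ≤ n) (G : SimpleGraph (Fin n)) (e : G ≃g turanGraph n 2) :
    Real.sqrt ((n / 2) * ((n + 1) / 2) : ℕ) ∈ spectrum ℝ (G.adjMatrix ℝ) := by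
  rw [mem_spec_iff]
  refine ⟨fun z => if (e z).val % 2 = 0 then Real.sqrt (n / 2 : ℕ) else Real.sqrt ((n + 1) / 2 : ℕ),
    ?_, ?_⟩
  · intro h
    have h0 := congrFun h (e.symm ⟨0, by omega⟩)
    simp at h0
    omega
  · intro w
    have h1 : ∑ z ∈ univ.filter (G.Adj w), (if (e z).val % 2 = 0 then Real.sqrt (n / 2 : ℕ)
        else Real.sqrt ((n + 1) / 2 : ℕ)) =
        ∑ z ∈ univ.filter ((turanGraph n 2).Adj (e w)), (if z.val % 2 = 0 then
          Real.sqrt (n / 2 : ℕ) else Real.sqrt ((n + 1) / 2 : ℕ)) := by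
      refine Finset.sum_equiv e.toEquiv ?_ ?_
      · intro z
        simp only [Finset.mem_filter, Finset.mem_univ, true_and]
        exact e.map_adj_iff.symm
      · intro z _; rfl
    rw [h1]
    beta_reduce
    rw [Nat.cast_mul, Real.sqrt_mul (by positivity)]
    have ha : Real.sqrt (n / 2 : ℕ) * Real.sqrt (n / 2 : ℕ) = (n / 2 : ℕ) :=
      Real.mul_self_sqrt (by positivity)
    have hb : Real.sqrt ((n + 1) / 2 : ℕ) * Real.sqrt ((n + 1) / 2 : ℕ) = ((n + 1) / 2 : ℕ) :=
      Real.mul_self_sqrt (by positivity)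
    by_cases hw : (e w).val % 2 = 0
    · have hf : univ.filter ((turanGraph n 2).Adj (e w)) =
          univ.filter (fun z : Fin n => ¬ z.val % 2 = 0) := by
        ext z; simp only [Finset.mem_filter, Finset.mem_univ, true_and, turanGraph_adj]; omega
      rw [hf, if_pos hw, Finset.sum_congr rfl (g := fun _ => Real.sqrt ((n + 1) / 2 : ℕ))
        (fun z hz => if_neg (Finset.mem_filter.1 hz).2), Finset.sum_const, card_odd, nsmul_eq_mul]
      linear_combination (- Real.sqrt ((n + 1) / 2 : ℕ)) * ha
    · have hf : univ.filter ((turanGraph n 2).Adj (e w)) =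
          univ.filter (fun z : Fin n => z.val % 2 = 0) := by
        ext z; simp only [Finset.mem_filter, Finset.mem_univ, true_and, turanGraph_adj]; omega
      rw [hf, if_neg hw, Finset.sum_congr rfl (g := fun _ => Real.sqrt (n / 2 : ℕ))
        (fun z hz => if_pos (Finset.mem_filter.1 hz).2), Finset.sum_const, card_even, nsmul_eq_mul]
      linear_combination (- Real.sqrt (n / 2 : ℕ)) * hb

lemma iso_of_split (n : ℕ) (G : SimpleGraph (Fin n)) (N : Finset (Fin n))
    (hN : N.card = (n + 1) / 2) (h : ∀ a b, G.Adj a b ↔ (a ∈ N ↔ b ∉ N)) :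
    Nonempty (G ≃g turanGraph n 2) := by
  have hc : Fintype.card {x : Fin n // x ∈ N} = Fintype.card {x : Fin n // x.val % 2 = 0} := by
    rw [Fintype.card_coe, hN, Fintype.card_subtype, card_even]
  let e0 := Fintype.equivOfCardEq hc
  let e := e0.extendSubtype
  have he : ∀ x, (e x).val % 2 = 0 ↔ x ∈ N := by
    intro x
    constructor
    · intro hx
      by_contra hxN
      exact Equiv.extendSubtype_not_mem e0 x hxN hx
    · intro hx; exact Equiv.extendSubtype_mem e0 x hx
  refine ⟨⟨e, ?_⟩⟩
  intro a b
  rw [turanGraph_adj, h]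
  have h1 := he a
  have h2 := he b
  rw [← h1, ← h2]
  omega

lemma iso_of_split' (n : ℕ) (G : SimpleGraph (Fin n)) (N : Finset (Fin n))
    (hN : N.card * (n - N.card) = (n / 2) * ((n + 1) / 2))
    (h : ∀ a b, G.Adj a b ↔ (a ∈ N ↔ b ∉ N)) :
    Nonempty (G ≃g turanGraph n 2) := by
  have hle : N.card ≤ n := by simpa using Finset.card_le_univ N
  obtain ⟨m, hm⟩ := Nat.exists_eq_add_of_le hle
  have hcases : N.card = (n + 1) / 2 ∨ m = (n + 1) / 2 := by
    rw [show n - N.card = m by omega] at hN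
    obtain ⟨a, ha⟩ : ∃ a, a = n / 2 := ⟨_, rfl⟩
    obtain ⟨b, hb⟩ : ∃ b, b = (n + 1) / 2 := ⟨_, rfl⟩
    rw [← ha, ← hb] at hN
    rw [← hb]
    have hab : a + b = N.card + m := by omega
    have : ((N.card : ℤ) - b) * (m - b) = 0 := by
      have e1 : (N.card : ℤ) * m = a * b := by exact_mod_cast hN
      have e2 : (a : ℤ) + b = N.card + m := by exact_mod_cast hab
      have : (a : ℤ) = N.card + m - b := by linarith
      rw [this] at e1
      linarith
    rcases mul_eq_zero.1 this with h | h
    · left; omega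
    · right; omega
  rcases hcases with hc | hc
  · exact iso_of_split n G N hc h
  · refine iso_of_split n G Nᶜ ?_ ?_
    · rw [Finset.card_compl, Fintype.card_fin]; omega
    · intro a b
      rw [h, Finset.mem_compl, Finset.mem_compl]; tauto

lemma radius_le (r n : ℕ) (hr : 1 ≤ r) (hodd : Odd r) (hn : 10 * r ≤ n)
    (G : SimpleGraph (Fin n)) (hfree : ¬ Contains G (theta r)) :
    ∀ l ∈ spectrum ℝ (G.adjMatrix ℝ), l ≤ Real.sqrt ((n / 2) * ((n + 1) / 2) : ℕ) ∧
      (l = Real.sqrt ((n / 2) * ((n + 1) / 2) : ℕ) → Nonempty (G ≃g turanGraph n 2)) := by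
  intro l hl
  obtain ⟨v, hv, hev⟩ := (mem_spec_iff G l).1 hl
  have hspec := spec G r hr hodd (by simpa using hn) hfree l v hv hev
  rw [Fintype.card_fin] at hspec
  constructor
  · by_contra hcon
    push Not at hcon
    have h0 := Real.sqrt_nonneg (((n / 2) * ((n + 1) / 2) : ℕ) : ℝ)
    have h1 : (((n / 2) * ((n + 1) / 2) : ℕ) : ℝ) < l ^ 2 := by
      rw [← Real.sqrt_lt_sqrt_iff (by positivity), Real.sqrt_sq (by linarith)]
      exact hcon
    exact h1.ne' (hspec h1.le).1
  · intro he
    have h1 : l ^ 2 = (((n / 2) * ((n + 1) / 2) : ℕ) : ℝ) := by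
      rw [he, Real.sq_sqrt (by positivity)]
    obtain ⟨-, N, hN, h⟩ := hspec h1.ge
    exact iso_of_split' n G N hN h

lemma radius_eq (r n : ℕ) (hr : 1 ≤ r) (hodd : Odd r) (hn : 10 * r ≤ n)
    (G : SimpleGraph (Fin n)) (hfree : ¬ Contains G (theta r)) (e : G ≃g turanGraph n 2) :
    adjSpectralRadius G = Real.sqrt ((n / 2) * ((n + 1) / 2) : ℕ) := by
  have hmem := turan_mem n (by omega) G e
  have hb := radius_le r n hr hodd hn G hfree
  exact IsGreatest.csSup_eq ⟨hmem, fun l hl => (hb l hl).1⟩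

/-- Theorem 1.7, odd case: for odd `r ≥ 1` and `n ≥ 10r`, the unique spectral extremal
`θ_{r+1}`-free graph on `n` vertices is `T_{n,2}`. -/
theorem stmt3 (r n : ℕ) (hr : 1 ≤ r) (hodd : Odd r) (hn : 10 * r ≤ n)
    (G : SimpleGraph (Fin n)) (hfree : ¬ Contains G (theta r)) :
    adjSpectralRadius G ≤ adjSpectralRadius (turanGraph n 2) ∧
    (adjSpectralRadius G = adjSpectralRadius (turanGraph n 2) ↔
      Nonempty (G ≃g turanGraph n 2)) := by
  have hT := radius_eq r n hr hodd hn (turanGraph n 2) (turan_free n r hodd) SimpleGraph.Iso.refl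
  have hb := radius_le r n hr hodd hn G hfree
  have hpos : 0 < Real.sqrt ((n / 2) * ((n + 1) / 2) : ℕ) := by
    apply Real.sqrt_pos.2
    exact_mod_cast Nat.mul_pos (by omega) (by omega)
  rw [hT]
  refine ⟨Real.sSup_le (fun l hl => (hb l hl).1) hpos.le, ?_, ?_⟩
  · intro he
    have hne : (spectrum ℝ (G.adjMatrix ℝ)).Nonempty := by
      by_contra h
      rw [Set.not_nonempty_iff_eq_empty] at h
      unfold adjSpectralRadius at he
      rw [h, Real.sSup_empty] at he
      exact hpos.ne he
    have hfin : (spectrum ℝ (G.adjMatrix ℝ)).Finite := by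
      rw [← Matrix.spectrum_toLin']
      exact Module.End.finite_spectrum _
    exact (hb _ (hne.csSup_mem hfin)).2 he
  · rintro ⟨e⟩
    exact radius_eq r n hr hodd hn G hfree e
end

section
/- Let r ≥ 1 and let n be an integer with n ≥ (13/2)r (i.e., 2n ≥ 13r). Then ex(n, B_{r+1}) = ⌊n²/4⌋. -/
open SimpleGraph Finset

attribute [local instance] Classical.propDecidable

lemma aux_ineq {n : ℕ} (a : Fin n → Fin n → ℝ) (h01 : ∀ u v, a u v = 0 ∨ a u v = 1)
    (hs : ∀ u v, a u v = a v u) (b : ℝ) (hb : 0 < b) (hbn : 6 * b ≤ n)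
    (hc : ∀ u v, a u v = 1 → ∑ w, a u w * a v w ≤ b) :
    2 * ∑ u, ∑ v, a u v ≤ (n : ℝ) ^ 2 := by
  set d : Fin n → ℝ := fun u => ∑ v, a u v with hd
  set c : Fin n → Fin n → ℝ := fun u v => ∑ w, a u w * a v w with hcdef
  have a0 : ∀ u v, 0 ≤ a u v := fun u v => by rcases h01 u v with h | h <;> simp [h]
  have a1 : ∀ u v, a u v ≤ 1 := fun u v => by rcases h01 u v with h | h <;> simp [h]
  have c0 : ∀ u v, 0 ≤ c u v := fun u v =>
    Finset.sum_nonneg fun w _ => mul_nonneg (a0 _ _) (a0 _ _)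
  have hn0 : (0 : ℝ) < n := by linarith
  have csym : ∀ u v, c u v = c v u := fun u v =>
    Finset.sum_congr rfl fun w _ => mul_comm _ _
  -- inclusion-exclusion for pairs
  have cs : ∀ u v, d u + d v - n ≤ c u v := by
    intro u v
    have : c u v - (d u + d v - n) = ∑ x, (1 - a u x) * (1 - a v x) := by
      have : (n : ℝ) = ∑ x : Fin n, (1 : ℝ) := by simp
      rw [this]
      simp only [hd, hcdef, ← Finset.sum_add_distrib, ← Finset.sum_sub_distrib]
      exact Finset.sum_congr rfl fun x _ => by ring
    have h2 : 0 ≤ ∑ x, (1 - a u x) * (1 - a v x) := Finset.sum_nonneg fun x _ =>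
      mul_nonneg (by linarith [a1 u x]) (by linarith [a1 v x])
    linarith
  have ct : ∀ u v w, d u + d v + d w - n ≤ c u v + c v w + c u w := by
    intro u v w
    have : c u v + c v w + c u w - (d u + d v + d w - n) =
        ∑ x, ((1 - a u x) * (1 - a v x) * (1 - a w x) + a u x * a v x * a w x) := by
      have : (n : ℝ) = ∑ x : Fin n, (1 : ℝ) := by simp
      rw [this]
      simp only [hd, hcdef, ← Finset.sum_add_distrib, ← Finset.sum_sub_distrib]
      exact Finset.sum_congr rfl fun x _ => by ring
    have h2 : 0 ≤ ∑ x, ((1 - a u x) * (1 - a v x) * (1 - a w x) + a u x * a v x * a w x) :=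
      Finset.sum_nonneg fun x _ => add_nonneg
        (mul_nonneg (mul_nonneg (by linarith [a1 u x]) (by linarith [a1 v x]))
          (by linarith [a1 w x])) (mul_nonneg (mul_nonneg (a0 _ _) (a0 _ _)) (a0 _ _))
    linarith
  -- triangle sums
  have tri : ∀ f : Fin n → Fin n → ℝ,
      ∑ u, ∑ v, ∑ w, a u v * a u w * a v w * f u v = ∑ u, ∑ v, a u v * c u v * f u v := by
    intro f
    refine Finset.sum_congr rfl fun u _ => Finset.sum_congr rfl fun v _ => ?_
    simp only [hcdef, Finset.mul_sum, Finset.sum_mul]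
    exact Finset.sum_congr rfl fun w _ => by ring
  have tri2 : ∀ f : Fin n → Fin n → ℝ,
      ∑ u, ∑ v, ∑ w, a u v * a u w * a v w * f u w = ∑ u, ∑ v, a u v * c u v * f u v := by
    intro f
    rw [← tri]
    refine Finset.sum_congr rfl fun u _ => ?_
    rw [Finset.sum_comm]
    refine Finset.sum_congr rfl fun v _ => Finset.sum_congr rfl fun w _ => ?_
    rw [hs w v]; ring
  have tri3 : ∀ f : Fin n → Fin n → ℝ,
      ∑ u, ∑ v, ∑ w, a u v * a u w * a v w * f v w = ∑ u, ∑ v, a u v * c u v * f u v := by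
    intro f
    rw [← tri2, Finset.sum_comm]
    refine Finset.sum_congr rfl fun u _ => Finset.sum_congr rfl fun v _ =>
      Finset.sum_congr rfl fun w _ => ?_
    rw [hs v u]; ring
  set C2 := ∑ u, ∑ v, a u v * c u v * c u v with hC2
  set C1 := ∑ u, ∑ v, a u v * c u v * 1 with hC1
  set S := ∑ u, ∑ v, a u v * c u v * (d u + d v - n) with hS
  have key : 3 * S + n * C1 ≤ 6 * C2 := by
    have h1 : 0 ≤ ∑ u, ∑ v, ∑ w, a u v * a u w * a v w *
        (2 * (c u v + c v w + c u w) - 2 * (d u + d v + d w - n)) :=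
      Finset.sum_nonneg fun u _ => Finset.sum_nonneg fun v _ => Finset.sum_nonneg fun w _ =>
        mul_nonneg (mul_nonneg (mul_nonneg (a0 _ _) (a0 _ _)) (a0 _ _)) (by linarith [ct u v w])
    have h2 : ∑ u, ∑ v, ∑ w, a u v * a u w * a v w *
        (2 * (c u v + c v w + c u w) - 2 * (d u + d v + d w - n)) =
        ∑ u, ∑ v, ∑ w, a u v * a u w * a v w * (2 * c u v - (d u + d v - n) - n / 3) +
        ∑ u, ∑ v, ∑ w, a u v * a u w * a v w * (2 * c u w - (d u + d w - n) - n / 3) +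
        ∑ u, ∑ v, ∑ w, a u v * a u w * a v w * (2 * c v w - (d v + d w - n) - n / 3) := by
      simp only [← Finset.sum_add_distrib]
      refine Finset.sum_congr rfl fun u _ => Finset.sum_congr rfl fun v _ =>
        Finset.sum_congr rfl fun w _ => by ring
    rw [h2, tri (fun u v => 2 * c u v - (d u + d v - n) - n / 3),
      tri2 (fun u v => 2 * c u v - (d u + d v - n) - n / 3),
      tri3 (fun u v => 2 * c u v - (d u + d v - n) - n / 3)] at h1
    have h3 : ∑ u, ∑ v, a u v * c u v * (2 * c u v - (d u + d v - n) - n / 3) =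
        2 * C2 - S - n / 3 * C1 := by
      simp only [hC2, hC1, hS, Finset.mul_sum, ← Finset.sum_sub_distrib]
      refine Finset.sum_congr rfl fun u _ => Finset.sum_congr rfl fun v _ => by ring
    rw [h3] at h1
    linarith
  have key2 : b * ∑ u, ∑ v, a u v * (d u + d v - n) ≤ S + b * C1 - C2 := by
    simp only [hC2, hC1, hS, Finset.mul_sum, ← Finset.sum_sub_distrib, ← Finset.sum_add_distrib]
    refine Finset.sum_le_sum fun u _ => Finset.sum_le_sum fun v _ => ?_
    rcases h01 u v with h | h
    · simp [h]
    · have := hc u v h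
      have h4 := cs u v
      rw [h]
      have : c u v ≤ b := this
      nlinarith [mul_nonneg (sub_nonneg.2 h4) (sub_nonneg.2 this)]
  have key3 : C2 ≤ b * C1 := by
    simp only [hC2, hC1, Finset.mul_sum]
    refine Finset.sum_le_sum fun u _ => Finset.sum_le_sum fun v _ => ?_
    rcases h01 u v with h | h
    · simp [h]
    · have : c u v ≤ b := hc u v h
      rw [h]
      nlinarith [mul_nonneg (c0 u v) (sub_nonneg.2 this)]
  have hC10 : 0 ≤ C1 := Finset.sum_nonneg fun u _ => Finset.sum_nonneg fun v _ => by
    have := mul_nonneg (a0 u v) (c0 u v)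
    linarith
  set D := ∑ u, d u with hD
  have key4 : ∑ u, ∑ v, a u v * (d u + d v - n) = 2 * ∑ u, d u ^ 2 - n * D := by
    have e1 : ∑ u, ∑ v, a u v * d u = ∑ u, d u ^ 2 := by
      refine Finset.sum_congr rfl fun u _ => ?_
      rw [← Finset.sum_mul, sq]
    have e2 : ∑ u, ∑ v, a u v * d v = ∑ u, d u ^ 2 := by
      rw [Finset.sum_comm, ← e1]
      refine Finset.sum_congr rfl fun u _ => Finset.sum_congr rfl fun v _ => by rw [hs]
    have e3 : n * D = ∑ u, ∑ v, a u v * n := by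
      simp only [hD, hd, Finset.mul_sum]
      refine Finset.sum_congr rfl fun u _ => Finset.sum_congr rfl fun v _ => by ring
    rw [two_mul, e3]
    nth_rewrite 1 [← e1]
    rw [← e2]
    simp only [← Finset.sum_sub_distrib, ← Finset.sum_add_distrib]
    refine Finset.sum_congr rfl fun u _ => Finset.sum_congr rfl fun v _ => by ring
  have cauchy : D ^ 2 ≤ n * ∑ u, d u ^ 2 := by
    have := sq_sum_le_card_mul_sum_sq (s := (Finset.univ : Finset (Fin n))) (f := d)
    simpa using this
  have hfin : b * (2 * ∑ u, d u ^ 2 - n * D) ≤ 0 := by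
    rw [← key4]
    nlinarith [mul_nonneg hC10 (sub_nonneg.2 hbn)]
  have h5 : 2 * ∑ u, d u ^ 2 - n * D ≤ 0 := by
    by_contra h
    push Not at h
    linarith [mul_pos hb h]
  show 2 * D ≤ (n : ℝ) ^ 2
  by_contra h
  push Not at h
  have hDpos : 0 < D := by nlinarith
  have : n * (2 * ∑ u, d u ^ 2 - n * D) ≤ 0 := mul_nonpos_of_nonneg_of_nonpos hn0.le h5
  nlinarith [mul_pos hDpos (sub_pos.2 h)]

lemma contains_book {n r : ℕ} (G : SimpleGraph (Fin n)) (u v : Fin n) (huv : G.Adj u v)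
    (h : r + 1 ≤ (Finset.univ.filter fun w => G.Adj u w ∧ G.Adj v w).card) :
    Contains G (book (r + 1)) := by
  obtain ⟨t, ht, htc⟩ := Finset.exists_subset_card_eq h
  let e := (t.equivFinOfCardEq htc).symm
  have he : ∀ i, G.Adj u (e i) ∧ G.Adj v (e i) := fun i => by
    have := ht (e i).2
    simpa using this
  have inj : Function.Injective (Sum.elim (fun i : Fin 2 => if i = 0 then u else v) (fun i => (e i : Fin n))) := by
    rintro (i | i) (j | j) hij
    · have := huv.ne
      fin_cases i <;> fin_cases j <;> simp_all
    · have h1 := (he j).1.ne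
      have h2 := (he j).2.ne
      fin_cases i <;> simp_all
    · have h1 := (he i).1.ne'
      have h2 := (he i).2.ne'
      fin_cases j <;> simp_all
    · simp only [Sum.elim_inr] at hij
      rw [e.injective (Subtype.ext hij)]
  have adj : ∀ a b, (book (r + 1)).Adj a b → G.Adj ((Sum.elim (fun i : Fin 2 => if i = 0 then u else v) (fun i => (e i : Fin n))) a) ((Sum.elim (fun i : Fin 2 => if i = 0 then u else v) (fun i => (e i : Fin n))) b) := by
    have huv' := huv.symm
    rintro (i | i) (j | j) hij
    · have hne : i ≠ j := fun hh => hij.ne (by rw [hh])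
      fin_cases i <;> fin_cases j <;> simp_all
    · have h1 := he j
      fin_cases i <;> simp_all
    · have h1 := (he i).1.symm
      have h2 := (he i).2.symm
      fin_cases j <;> simp_all
    · simp [book] at hij
  exact ⟨⟨_, inj⟩, adj⟩

/-- Corollary 1.11 (i): `ex(n, B_{r+1}) = ⌊n²/4⌋` for `n ≥ 13r/2`. -/
theorem stmt6 (r n : ℕ) (hr : 1 ≤ r) (hn : 13 * r ≤ 2 * n) :
    (∀ G : SimpleGraph (Fin n), ¬ Contains G (book (r + 1)) → edgeCount G ≤ n ^ 2 / 4) ∧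
    (∃ G : SimpleGraph (Fin n), ¬ Contains G (book (r + 1)) ∧ edgeCount G = n ^ 2 / 4) := by
  have ec : ∀ G : SimpleGraph (Fin n), edgeCount G = G.edgeFinset.card := fun G => by
    rw [edgeCount, ← SimpleGraph.coe_edgeFinset, Set.ncard_coe_finset]
  constructor
  · intro G hG
    have h := aux_ineq (fun u v => if G.Adj u v then (1 : ℝ) else 0)
      (fun u v => by by_cases h : G.Adj u v <;> simp [h])
      (fun u v => by simp [G.adj_comm]) r (by exact_mod_cast hr)
      (by have : 6 * r ≤ n := by omega
          exact_mod_cast this) (by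
        intro u v huv
        have huv : G.Adj u v := by
          by_contra h
          simp [h] at huv
        by_contra hlt
        push Not at hlt
        apply hG
        apply contains_book G u v huv
        have e : ∑ w, (if G.Adj u w then (1 : ℝ) else 0) * (if G.Adj v w then (1 : ℝ) else 0)
            = ((Finset.univ.filter fun w => G.Adj u w ∧ G.Adj v w).card : ℝ) := by
          rw [Finset.card_filter]
          push_cast
          refine Finset.sum_congr rfl fun w _ => ?_
          by_cases h1 : G.Adj u w <;> by_cases h2 : G.Adj v w <;> simp [h1, h2]
        rw [e] at hlt
        exact_mod_cast hlt)
    have hd : ∑ u, ∑ v, (if G.Adj u v then (1 : ℝ) else 0) = 2 * (G.edgeFinset.card : ℝ) := by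
      have := G.sum_degrees_eq_twice_card_edges
      have h2 : ((∑ v, G.degree v : ℕ) : ℝ) = ((2 * G.edgeFinset.card : ℕ) : ℝ) := by
        exact_mod_cast congrArg (Nat.cast (R := ℝ)) this
      push_cast at h2
      rw [← h2]
      refine Finset.sum_congr rfl fun u _ => ?_
      rw [← G.card_neighborFinset_eq_degree, G.neighborFinset_eq_filter, Finset.card_filter]
      push_cast
      rfl
    rw [hd] at h
    rw [ec, Nat.le_div_iff_mul_le (by norm_num)]
    have : 2 * (2 * G.edgeFinset.card) ≤ n ^ 2 := by exact_mod_cast h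
    linarith
  · refine ⟨turanGraph n 2, ?_, ?_⟩
    · rintro ⟨f, hf⟩
      have h1 := hf (Sum.inl 0) (Sum.inl 1) (by simp [book])
      have h2 := hf (Sum.inl 0) (Sum.inr 0) (by simp [book])
      have h3 := hf (Sum.inl 1) (Sum.inr 0) (by simp [book])
      simp only [turanGraph] at h1 h2 h3
      omega
    · rw [ec]
      have := @card_edgeFinset_turanGraph n 2
      trans (n ^ 2 - (n % 2) ^ 2) * (2 - 1) / (2 * 2) + (n % 2).choose 2
      · rw [← this]; congr!
      obtain ⟨k, rfl | rfl⟩ := Nat.even_or_odd' n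
      · simp
      · have e1 : (2 * k + 1) % 2 = 1 := by omega
        rw [e1]
        have e2 : (2 * k + 1) ^ 2 = 4 * (k ^ 2 + k) + 1 := by ring
        rw [e2]
        simp
        omega
end
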